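/- Let n ≥ 1, σ ≥ 1 and δ ∈ (0, σ/2). Let v₀, v₁ : ℝⁿ → ℂ be measurable functions with ∫_{ℝⁿ} (1+|ξ|²)^{σ} |v₀(ξ)|² dξ < ∞ and ∫_{ℝⁿ} |v₁(ξ)|² dξ < ∞, and set v(t,ξ) = K̂₀(t,ξ) v₀(ξ) + K̂₁(t,ξ) v₁(ξ) and w(t,ξ) = −|ξ|^{2σ} K̂₁(t,ξ) v₀(ξ) + (K̂₀(t,ξ) − |ξ|^{2δ} K̂₁(t,ξ)) v₁(ξ). Then for every t > 0 there exists a > 0 such that ∫_{ℝⁿ} exp(2a(1+|ξ|²)^{δ}) (1+|ξ|²)^{σ} |v(t,ξ)|² dξ < ∞ and ∫_{ℝⁿ} exp(2a(1+|ξ|²)^{δ}) |w(t,ξ)|² dξ < ∞. (In other words, the solution u(t,·) of the linear equation with data (u₀,u₁) ∈ H^σ × L² belongs to the Gevrey–Sobolev space Γ^{1/(2δ),σ}, and |D|^σ u(t,·), u_t(t,·) belong to Γ^{1/(2δ),0}, for all t > 0.) -/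

import Mathlib

open MeasureTheory Real Complex
open scoped ENNReal NNReal

noncomputable section

variable {n : ℕ}

/-- First characteristic root `λ₁(ξ) = (−|ξ|^{2δ} + √(|ξ|^{4δ} − 4|ξ|^{2σ}))/2`
(principal complex square root). -/
def lam1 (σ δ : ℝ) (ξ : EuclideanSpace ℝ (Fin n)) : ℂ :=
  (-((‖ξ‖ ^ (2 * δ) : ℝ) : ℂ) +
      (((‖ξ‖ ^ (4 * δ) - 4 * ‖ξ‖ ^ (2 * σ) : ℝ) : ℂ) ^ ((1 : ℂ) / 2))) / 2

/-- Second characteristic root `λ₂(ξ) = (−|ξ|^{2δ} − √(|ξ|^{4δ} − 4|ξ|^{2σ}))/2`. -/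
def lam2 (σ δ : ℝ) (ξ : EuclideanSpace ℝ (Fin n)) : ℂ :=
  (-((‖ξ‖ ^ (2 * δ) : ℝ) : ℂ) -
      (((‖ξ‖ ^ (4 * δ) - 4 * ‖ξ‖ ^ (2 * σ) : ℝ) : ℂ) ^ ((1 : ℂ) / 2))) / 2

/-- Fourier multiplier `K̂₀(t,ξ) = (λ₁ e^{λ₂ t} − λ₂ e^{λ₁ t})/(λ₁ − λ₂)`. -/
def K0hat (σ δ : ℝ) (t : ℝ) (ξ : EuclideanSpace ℝ (Fin n)) : ℂ :=
  (lam1 σ δ ξ * Complex.exp (lam2 σ δ ξ * (t : ℂ)) -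
      lam2 σ δ ξ * Complex.exp (lam1 σ δ ξ * (t : ℂ))) / (lam1 σ δ ξ - lam2 σ δ ξ)

/-- Fourier multiplier `K̂₁(t,ξ) = (e^{λ₁ t} − e^{λ₂ t})/(λ₁ − λ₂)`. -/
def K1hat (σ δ : ℝ) (t : ℝ) (ξ : EuclideanSpace ℝ (Fin n)) : ℂ :=
  (Complex.exp (lam1 σ δ ξ * (t : ℂ)) - Complex.exp (lam2 σ δ ξ * (t : ℂ))) /
    (lam1 σ δ ξ - lam2 σ δ ξ)

/-- A cut-off: a smooth, compactly supported, radial function with `0 ≤ χ ≤ 1`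
and `χ(ξ) = 1` for `|ξ| ≤ 1`. -/
def IsCutoff (χ : EuclideanSpace ℝ (Fin n) → ℝ) : Prop :=
  ContDiff ℝ (⊤ : ℕ∞) χ ∧ HasCompactSupport χ ∧ (∀ ξ, χ ξ ∈ Set.Icc (0 : ℝ) 1) ∧
    (∀ ξ, ‖ξ‖ ≤ 1 → χ ξ = 1) ∧ ∀ ξ η, ‖ξ‖ = ‖η‖ → χ ξ = χ η

/-!
Fix `ξ` and write `p = |ξ|^{2δ}`, `q = |ξ|^{2σ}`. For `|ξ| ≥ 1` one has `p² ≤ q`, so the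
characteristic roots are conjugate with real part `-p/2`, and their modulus `√q` is at most
`|λ₁ - λ₂|`. Hence `K̂₀`, `∂ₜK̂₁` and `√q K̂₁` are bounded by `2 exp(-pt/2)`, and this decay absorbs
`exp(a⟨ξ⟩^{2δ})` as soon as `2^δ a ≤ t/2`. For `|ξ| ≤ 1` the roots may coalesce, but they have
nonpositive real part, so the mean value inequality for `exp` on the left half-plane bounds the
divided differences and the weights are bounded as well.
-/

section DividedDifferences

variable {𝕜 : Type*} [NormedField 𝕜] {a b u v : 𝕜} {M : ℝ}

theorem norm_mul_norm_sub_div_sub_le (hu : ‖u‖ ≤ M) (hv : ‖v‖ ≤ M) (ha : ‖a‖ ≤ ‖a - b‖) :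
    ‖a‖ * ‖(u - v) / (a - b)‖ ≤ 2 * M := by
  have hM : 0 ≤ M := (norm_nonneg u).trans hu
  rw [norm_div, ← mul_div_assoc]
  refine div_le_of_le_mul₀ (norm_nonneg _) (by positivity) ?_
  calc ‖a‖ * ‖u - v‖ ≤ ‖a - b‖ * (‖u‖ + ‖v‖) := by gcongr; exact norm_sub_le u v
    _ ≤ ‖a - b‖ * (M + M) := by gcongr
    _ = 2 * M * ‖a - b‖ := by ring

theorem norm_mul_sub_mul_div_sub_le_two_mul (hu : ‖u‖ ≤ M) (hv : ‖v‖ ≤ M)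
    (ha : ‖a‖ ≤ ‖a - b‖) (hb : ‖b‖ ≤ ‖a - b‖) :
    ‖(a * u - b * v) / (a - b)‖ ≤ 2 * M := by
  have hM : 0 ≤ M := (norm_nonneg u).trans hu
  rw [norm_div]
  refine div_le_of_le_mul₀ (norm_nonneg _) (by positivity) ?_
  calc ‖a * u - b * v‖ ≤ ‖a‖ * ‖u‖ + ‖b‖ * ‖v‖ := by
        simpa only [norm_mul] using norm_sub_le (a * u) (b * v)
    _ ≤ ‖a - b‖ * M + ‖a - b‖ * M := by gcongr
    _ = 2 * M * ‖a - b‖ := by ring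

theorem norm_mul_sub_mul_div_sub_le_add {L : ℝ} (hL : 0 ≤ L) (hu : ‖u‖ ≤ M)
    (huv : ‖u - v‖ ≤ L * ‖a - b‖) :
    ‖(a * u - b * v) / (a - b)‖ ≤ M + ‖b‖ * L := by
  have hM : 0 ≤ M := (norm_nonneg u).trans hu
  rcases eq_or_ne (a - b) 0 with hab | hab
  · simpa only [hab, div_zero, norm_zero] using by positivity
  have hsplit : (a * u - b * v) / (a - b) = u + b * ((u - v) / (a - b)) := by
    field_simp
    ring
  have hquot : ‖(u - v) / (a - b)‖ ≤ L := by
    rw [norm_div]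
    exact div_le_of_le_mul₀ (norm_nonneg _) hL huv
  calc ‖(a * u - b * v) / (a - b)‖ ≤ ‖u‖ + ‖b‖ * ‖(u - v) / (a - b)‖ := by
        rw [hsplit, ← norm_mul]
        exact norm_add_le _ _
    _ ≤ M + ‖b‖ * L := by gcongr

end DividedDifferences

theorem norm_exp_sub_exp_le_of_re_nonpos {z w : ℂ} (hz : z.re ≤ 0) (hw : w.re ≤ 0) :
    ‖Complex.exp z - Complex.exp w‖ ≤ ‖z - w‖ := by
  have hbound : ∀ x ∈ {x : ℂ | x.re ≤ 0}, ‖Complex.exp x‖ ≤ 1 := fun x hx => by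
    rw [Complex.norm_exp]
    exact Real.exp_le_one_iff.mpr hx
  exact ((convex_halfSpace_re_le 0).norm_image_sub_le_of_norm_hasDerivWithin_le
    (fun x _ => (Complex.hasDerivAt_exp x).hasDerivWithinAt) hbound hw hz).trans_eq (one_mul _)

section CharacteristicRoots

/-- `z` is a characteristic root of the damped oscillator `y'' + p y' + q y = 0`. -/
def IsCharRoot (p q : ℝ) (z : ℂ) : Prop :=
  z ^ 2 + p * z + q = 0

variable {p q t : ℝ} {z w : ℂ}

theorem isCharRoot_of_add_of_mul (hadd : z + w = -p) (hmul : z * w = q) : IsCharRoot p q z := by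
  unfold IsCharRoot
  linear_combination z * hadd - hmul

namespace IsCharRoot

theorem re_eq (hz : IsCharRoot p q z) : z.re ^ 2 - z.im ^ 2 + p * z.re + q = 0 := by
  simpa [pow_two] using congrArg Complex.re hz

theorem im_eq_zero_or_re_eq (hz : IsCharRoot p q z) : z.im = 0 ∨ z.re = -p / 2 := by
  have him : z.re * z.im + z.im * z.re + p * z.im = 0 := by
    simpa [pow_two] using congrArg Complex.im hz
  have hfactor : z.im * (2 * z.re + p) = 0 := by linear_combination him
  exact (mul_eq_zero.mp hfactor).imp_right fun h => by linarith

theorem re_nonpos (hz : IsCharRoot p q z) (hp : 0 ≤ p) (hq : 0 ≤ q) : z.re ≤ 0 := by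
  rcases hz.im_eq_zero_or_re_eq with him | hre
  · by_contra! hpos
    have hreal := hz.re_eq
    rw [him] at hreal
    nlinarith [mul_nonneg hp hpos.le]
  · linarith

theorem re_eq_neg_half (hz : IsCharRoot p q z) (h : p ^ 2 < 4 * q) : z.re = -p / 2 := by
  refine hz.im_eq_zero_or_re_eq.resolve_left fun him => ?_
  have hreal := hz.re_eq
  rw [him] at hreal
  nlinarith [sq_nonneg (2 * z.re + p)]

theorem norm_sq_eq (hz : IsCharRoot p q z) (h : p ^ 2 < 4 * q) : ‖z‖ ^ 2 = q := by
  have hreal := hz.re_eq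
  rw [Complex.sq_norm, Complex.normSq_apply]
  rw [hz.re_eq_neg_half h] at hreal ⊢
  linear_combination -hreal

theorem norm_le_two (hz : IsCharRoot p q z) (hp : |p| ≤ 1) (hq : |q| ≤ 1) : ‖z‖ ≤ 2 := by
  have hsq : ‖z‖ ^ 2 ≤ |p| * ‖z‖ + |q| := by
    have hzz : z ^ 2 = -(p * z + q) := by
      unfold IsCharRoot at hz
      linear_combination hz
    calc ‖z‖ ^ 2 = ‖(p : ℂ) * z + q‖ := by rw [← norm_pow, hzz, norm_neg]
      _ ≤ ‖(p : ℂ) * z‖ + ‖(q : ℂ)‖ := norm_add_le _ _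
      _ = |p| * ‖z‖ + |q| := by simp only [norm_mul, Complex.norm_real, Real.norm_eq_abs]
  nlinarith [norm_nonneg z]

theorem norm_exp_le_one (hz : IsCharRoot p q z) (hp : 0 ≤ p) (hq : 0 ≤ q) (ht : 0 ≤ t) :
    ‖Complex.exp (z * t)‖ ≤ 1 := by
  rw [Complex.norm_exp, Complex.re_mul_ofReal]
  exact Real.exp_le_one_iff.mpr (mul_nonpos_of_nonpos_of_nonneg (hz.re_nonpos hp hq) ht)

theorem norm_exp_eq (hz : IsCharRoot p q z) (h : p ^ 2 < 4 * q) :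
    ‖Complex.exp (z * t)‖ = Real.exp (-(p * t / 2)) := by
  rw [Complex.norm_exp, Complex.re_mul_ofReal, hz.re_eq_neg_half h]
  congr 1
  ring

theorem norm_exp_sub_exp_le (hz : IsCharRoot p q z) (hw : IsCharRoot p q w) (hp : 0 ≤ p)
    (hq : 0 ≤ q) (ht : 0 ≤ t) :
    ‖Complex.exp (z * t) - Complex.exp (w * t)‖ ≤ t * ‖z - w‖ := by
  have hre {x : ℂ} (hx : IsCharRoot p q x) : (x * t).re ≤ 0 := by
    rw [Complex.re_mul_ofReal]
    exact mul_nonpos_of_nonpos_of_nonneg (hx.re_nonpos hp hq) ht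
  calc ‖Complex.exp (z * t) - Complex.exp (w * t)‖ ≤ ‖z * t - w * t‖ :=
        norm_exp_sub_exp_le_of_re_nonpos (hre hz) (hre hw)
    _ = t * ‖z - w‖ := by
        rw [← sub_mul, norm_mul, Complex.norm_of_nonneg ht, mul_comm]

end IsCharRoot

theorem norm_le_norm_sub_of_add_of_mul (hadd : z + w = -p) (hmul : z * w = q) (hq : 0 < q)
    (h : p ^ 2 ≤ 3 * q) : ‖z‖ ≤ ‖z - w‖ := by
  have hdisc : (z - w) ^ 2 = ((p ^ 2 - 4 * q : ℝ) : ℂ) := by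
    push_cast
    linear_combination (z + w - p) * hadd - 4 * hmul
  have hdist : ‖z - w‖ ^ 2 = 4 * q - p ^ 2 := by
    rw [← norm_pow, hdisc, Complex.norm_real, Real.norm_eq_abs, abs_of_nonpos (by linarith)]
    ring
  rw [← sq_le_sq₀ (norm_nonneg _) (norm_nonneg _), hdist,
    (isCharRoot_of_add_of_mul hadd hmul).norm_sq_eq (by linarith)]
  linarith

end CharacteristicRoots

section Multipliers

variable {σ δ t : ℝ} {ξ : EuclideanSpace ℝ (Fin n)}

theorem lam1_add_lam2 : lam1 σ δ ξ + lam2 σ δ ξ = -((‖ξ‖ ^ (2 * δ) : ℝ) : ℂ) := by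
  unfold lam1 lam2
  ring

theorem lam1_mul_lam2 : lam1 σ δ ξ * lam2 σ δ ξ = ((‖ξ‖ ^ (2 * σ) : ℝ) : ℂ) := by
  have hsq : (((‖ξ‖ ^ (4 * δ) - 4 * ‖ξ‖ ^ (2 * σ) : ℝ) : ℂ) ^ ((1 : ℂ) / 2)) ^ 2 =
      ((‖ξ‖ ^ (2 * δ)) ^ 2 - 4 * ‖ξ‖ ^ (2 * σ) : ℝ) := by
    rw [one_div, Complex.cpow_ofNat_inv_pow, ← Real.rpow_mul_natCast (norm_nonneg ξ),
      show 2 * δ * (2 : ℕ) = 4 * δ by push_cast; ring]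
  unfold lam1 lam2
  push_cast at hsq ⊢
  linear_combination (-1 / 4) * hsq

theorem lam1_isCharRoot : IsCharRoot (‖ξ‖ ^ (2 * δ)) (‖ξ‖ ^ (2 * σ)) (lam1 σ δ ξ) :=
  isCharRoot_of_add_of_mul lam1_add_lam2 lam1_mul_lam2

theorem lam2_isCharRoot : IsCharRoot (‖ξ‖ ^ (2 * δ)) (‖ξ‖ ^ (2 * σ)) (lam2 σ δ ξ) :=
  isCharRoot_of_add_of_mul ((add_comm _ _).trans lam1_add_lam2)
    ((mul_comm _ _).trans lam1_mul_lam2)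

/-- The Fourier multiplier `∂ₜK̂₁(t,ξ) = (λ₁ e^{λ₁ t} − λ₂ e^{λ₂ t})/(λ₁ − λ₂)`, which carries the
datum `v₁` to the velocity `w(t,ξ)`. Like `K0hat` and `K1hat`, it is `0` where `λ₁ = λ₂`. -/
def dtK1hat (σ δ t : ℝ) (ξ : EuclideanSpace ℝ (Fin n)) : ℂ :=
  (lam1 σ δ ξ * Complex.exp (lam1 σ δ ξ * t) - lam2 σ δ ξ * Complex.exp (lam2 σ δ ξ * t)) /
    (lam1 σ δ ξ - lam2 σ δ ξ)

theorem K0hat_sub_mul_K1hat :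
    K0hat σ δ t ξ - ((‖ξ‖ ^ (2 * δ) : ℝ) : ℂ) * K1hat σ δ t ξ = dtK1hat σ δ t ξ := by
  rw [← neg_eq_iff_eq_neg.mpr (lam1_add_lam2 (σ := σ) (δ := δ) (ξ := ξ))]
  unfold K0hat K1hat dtK1hat
  ring

@[fun_prop]
theorem measurable_lam1 : Measurable (lam1 σ δ : EuclideanSpace ℝ (Fin n) → ℂ) := by
  unfold lam1
  fun_prop

@[fun_prop]
theorem measurable_lam2 : Measurable (lam2 σ δ : EuclideanSpace ℝ (Fin n) → ℂ) := by
  unfold lam2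
  fun_prop

@[fun_prop]
theorem measurable_K0hat : Measurable (K0hat σ δ t : EuclideanSpace ℝ (Fin n) → ℂ) := by
  unfold K0hat
  fun_prop

@[fun_prop]
theorem measurable_K1hat : Measurable (K1hat σ δ t : EuclideanSpace ℝ (Fin n) → ℂ) := by
  unfold K1hat
  fun_prop

@[fun_prop]
theorem measurable_dtK1hat : Measurable (dtK1hat σ δ t : EuclideanSpace ℝ (Fin n) → ℂ) := by
  unfold dtK1hat
  fun_prop

theorem norm_K1hat_le (ht : 0 ≤ t) : ‖K1hat σ δ t ξ‖ ≤ t := by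
  rw [K1hat, norm_div]
  exact div_le_of_le_mul₀ (norm_nonneg _) ht
    (lam1_isCharRoot.norm_exp_sub_exp_le lam2_isCharRoot (by positivity) (by positivity) ht)

section LowFrequency

theorem norm_lam2_le_two (hσ : 0 ≤ σ) (hδ : 0 ≤ δ) (hξ : ‖ξ‖ ≤ 1) : ‖lam2 σ δ ξ‖ ≤ 2 := by
  have habs {s : ℝ} (hs : 0 ≤ s) : |‖ξ‖ ^ (2 * s)| ≤ 1 := by
    rw [abs_of_nonneg (by positivity)]
    exact Real.rpow_le_one (norm_nonneg ξ) hξ (by positivity)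
  exact lam2_isCharRoot.norm_le_two (habs hδ) (habs hσ)

theorem norm_K0hat_le_of_norm_le_one (hσ : 0 ≤ σ) (hδ : 0 ≤ δ) (ht : 0 ≤ t) (hξ : ‖ξ‖ ≤ 1) :
    ‖K0hat σ δ t ξ‖ ≤ 1 + 2 * t := by
  have hexp := (lam2_isCharRoot (σ := σ) (δ := δ) (ξ := ξ)).norm_exp_le_one
    (by positivity) (by positivity) ht
  have hsub := (lam2_isCharRoot (σ := σ) (δ := δ) (ξ := ξ)).norm_exp_sub_exp_le lam1_isCharRoot
    (by positivity) (by positivity) ht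
  rw [norm_sub_rev (lam2 σ δ ξ)] at hsub
  refine (norm_mul_sub_mul_div_sub_le_add ht hexp hsub).trans ?_
  gcongr
  exact norm_lam2_le_two hσ hδ hξ

theorem norm_dtK1hat_le_of_norm_le_one (hσ : 0 ≤ σ) (hδ : 0 ≤ δ) (ht : 0 ≤ t) (hξ : ‖ξ‖ ≤ 1) :
    ‖dtK1hat σ δ t ξ‖ ≤ 1 + 2 * t := by
  have hexp := (lam1_isCharRoot (σ := σ) (δ := δ) (ξ := ξ)).norm_exp_le_one
    (by positivity) (by positivity) ht
  have hsub := (lam1_isCharRoot (σ := σ) (δ := δ) (ξ := ξ)).norm_exp_sub_exp_le lam2_isCharRoot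
    (by positivity) (by positivity) ht
  refine (norm_mul_sub_mul_div_sub_le_add ht hexp hsub).trans ?_
  gcongr
  exact norm_lam2_le_two hσ hδ hξ

end LowFrequency

section HighFrequency

theorem sq_norm_rpow_le (hδσ : δ ≤ σ / 2) (hξ : 1 ≤ ‖ξ‖) :
    (‖ξ‖ ^ (2 * δ)) ^ 2 ≤ ‖ξ‖ ^ (2 * σ) := by
  rw [← Real.rpow_mul_natCast (norm_nonneg ξ)]
  exact Real.rpow_le_rpow_of_exponent_le hξ (by push_cast; linarith)

theorem sq_norm_rpow_lt (hδσ : δ ≤ σ / 2) (hξ : 1 ≤ ‖ξ‖) :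
    (‖ξ‖ ^ (2 * δ)) ^ 2 < 4 * ‖ξ‖ ^ (2 * σ) := by
  have hq : 0 < ‖ξ‖ ^ (2 * σ) := by positivity
  linarith [sq_norm_rpow_le hδσ hξ]

theorem norm_lam1_eq (hδσ : δ ≤ σ / 2) (hξ : 1 ≤ ‖ξ‖) : ‖lam1 σ δ ξ‖ = ‖ξ‖ ^ σ := by
  rw [← sq_eq_sq₀ (norm_nonneg _) (by positivity),
    lam1_isCharRoot.norm_sq_eq (sq_norm_rpow_lt hδσ hξ), ← Real.rpow_mul_natCast (norm_nonneg ξ)]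
  congr 1
  push_cast
  ring

theorem norm_lam1_le_norm_sub (hδσ : δ ≤ σ / 2) (hξ : 1 ≤ ‖ξ‖) :
    ‖lam1 σ δ ξ‖ ≤ ‖lam1 σ δ ξ - lam2 σ δ ξ‖ := by
  have hq : 0 < ‖ξ‖ ^ (2 * σ) := by positivity
  exact norm_le_norm_sub_of_add_of_mul lam1_add_lam2 lam1_mul_lam2 hq
    (by linarith [sq_norm_rpow_le hδσ hξ])

theorem norm_lam2_le_norm_sub (hδσ : δ ≤ σ / 2) (hξ : 1 ≤ ‖ξ‖) :
    ‖lam2 σ δ ξ‖ ≤ ‖lam1 σ δ ξ - lam2 σ δ ξ‖ := by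
  have hq : 0 < ‖ξ‖ ^ (2 * σ) := by positivity
  rw [norm_sub_rev]
  exact norm_le_norm_sub_of_add_of_mul ((add_comm _ _).trans lam1_add_lam2)
    ((mul_comm _ _).trans lam1_mul_lam2) hq (by linarith [sq_norm_rpow_le hδσ hξ])

theorem norm_K0hat_le_of_one_le_norm (hδσ : δ ≤ σ / 2) (hξ : 1 ≤ ‖ξ‖) :
    ‖K0hat σ δ t ξ‖ ≤ 2 * Real.exp (-(‖ξ‖ ^ (2 * δ) * t / 2)) :=
  norm_mul_sub_mul_div_sub_le_two_mul
    (lam2_isCharRoot.norm_exp_eq (sq_norm_rpow_lt hδσ hξ)).le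
    (lam1_isCharRoot.norm_exp_eq (sq_norm_rpow_lt hδσ hξ)).le
    (norm_lam1_le_norm_sub hδσ hξ) (norm_lam2_le_norm_sub hδσ hξ)

theorem norm_dtK1hat_le_of_one_le_norm (hδσ : δ ≤ σ / 2) (hξ : 1 ≤ ‖ξ‖) :
    ‖dtK1hat σ δ t ξ‖ ≤ 2 * Real.exp (-(‖ξ‖ ^ (2 * δ) * t / 2)) :=
  norm_mul_sub_mul_div_sub_le_two_mul
    (lam1_isCharRoot.norm_exp_eq (sq_norm_rpow_lt hδσ hξ)).le
    (lam2_isCharRoot.norm_exp_eq (sq_norm_rpow_lt hδσ hξ)).le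
    (norm_lam1_le_norm_sub hδσ hξ) (norm_lam2_le_norm_sub hδσ hξ)

theorem rpow_mul_norm_K1hat_le_of_one_le_norm (hδσ : δ ≤ σ / 2) (hξ : 1 ≤ ‖ξ‖) :
    ‖ξ‖ ^ σ * ‖K1hat σ δ t ξ‖ ≤ 2 * Real.exp (-(‖ξ‖ ^ (2 * δ) * t / 2)) := by
  rw [← norm_lam1_eq hδσ hξ]
  exact norm_mul_norm_sub_div_sub_le
    (lam1_isCharRoot.norm_exp_eq (sq_norm_rpow_lt hδσ hξ)).le
    (lam2_isCharRoot.norm_exp_eq (sq_norm_rpow_lt hδσ hξ)).le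
    (norm_lam1_le_norm_sub hδσ hξ)

end HighFrequency

end Multipliers

section Weights

variable {r s : ℝ}

theorem one_add_sq_rpow_le_of_le_one (hs : 0 ≤ s) (hr : 0 ≤ r) (hr1 : r ≤ 1) :
    (1 + r ^ 2) ^ s ≤ 2 ^ s :=
  Real.rpow_le_rpow (by positivity) (by nlinarith) hs

theorem one_add_sq_rpow_le_of_one_le (hs : 0 ≤ s) (hr : 1 ≤ r) :
    (1 + r ^ 2) ^ s ≤ 2 ^ s * r ^ (2 * s) := by
  have hr0 : 0 ≤ r := by linarith
  calc (1 + r ^ 2) ^ s ≤ (2 * r ^ 2) ^ s := Real.rpow_le_rpow (by positivity) (by nlinarith) hs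
    _ = 2 ^ s * r ^ (2 * s) := by
        rw [Real.mul_rpow two_pos.le (by positivity), ← Real.rpow_natCast_mul hr0, Nat.cast_ofNat]

theorem rpow_two_mul_le_one_add_sq_rpow (hs : 0 ≤ s) (hr : 0 ≤ r) :
    r ^ (2 * s) ≤ (1 + r ^ 2) ^ s := by
  rw [← Nat.cast_ofNat (n := 2), Real.rpow_natCast_mul hr]
  exact Real.rpow_le_rpow (by positivity) (by linarith) hs

/-- The exponent `a = t / 2^{δ+1}` for which `exp(a⟨ξ⟩^{2δ})` is absorbed at time `t` by the
high-frequency decay `exp(-|ξ|^{2δ} t / 2)`. -/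
def gevreyRadius (δ t : ℝ) : ℝ :=
  t / (2 * 2 ^ δ)

theorem gevreyRadius_pos {δ t : ℝ} (ht : 0 < t) : 0 < gevreyRadius δ t := by
  unfold gevreyRadius
  positivity

theorem gevreyRadius_mul_le {δ t x y : ℝ} (ht : 0 ≤ t) (h : x ≤ 2 ^ δ * y) :
    2 * gevreyRadius δ t * x ≤ y * t := by
  unfold gevreyRadius
  calc 2 * (t / (2 * 2 ^ δ)) * x ≤ 2 * (t / (2 * 2 ^ δ)) * (2 ^ δ * y) := by gcongr
    _ = y * t := by field_simp

theorem exp_gevreyRadius_mul_sq_le {δ t x M : ℝ} (hδ : 0 ≤ δ) (ht : 0 ≤ t) (hr : 0 ≤ r)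
    (hx : 0 ≤ x) (hlow : r ≤ 1 → x ≤ M)
    (hhigh : 1 ≤ r → x ≤ M * Real.exp (-(r ^ (2 * δ) * t / 2))) :
    Real.exp (2 * gevreyRadius δ t * (1 + r ^ 2) ^ δ) * x ^ 2 ≤ Real.exp t * M ^ 2 := by
  rcases le_total r 1 with hr1 | hr1
  · have hweight : 2 * gevreyRadius δ t * (1 + r ^ 2) ^ δ ≤ t := by
      simpa using gevreyRadius_mul_le (y := 1) ht
        (by simpa using one_add_sq_rpow_le_of_le_one hδ hr hr1)
    gcongr
    exact hlow hr1
  · have hweight : 2 * gevreyRadius δ t * (1 + r ^ 2) ^ δ ≤ r ^ (2 * δ) * t :=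
      gevreyRadius_mul_le ht (one_add_sq_rpow_le_of_one_le hδ hr1)
    calc Real.exp (2 * gevreyRadius δ t * (1 + r ^ 2) ^ δ) * x ^ 2
        ≤ Real.exp (r ^ (2 * δ) * t) * (M * Real.exp (-(r ^ (2 * δ) * t / 2))) ^ 2 := by
          gcongr
          exact hhigh hr1
      _ = M ^ 2 := by
          rw [mul_pow, ← Real.exp_nat_mul, mul_left_comm, ← Real.exp_add]
          simp [mul_div_cancel₀]
      _ ≤ Real.exp t * M ^ 2 := le_mul_of_one_le_left (sq_nonneg M) (Real.one_le_exp ht)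

end Weights

section WeightedBounds

variable {σ δ t : ℝ}

theorem exp_mul_norm_K0hat_sq_le (hδ : 0 ≤ δ) (hδσ : δ ≤ σ / 2) (ht : 0 ≤ t)
    (ξ : EuclideanSpace ℝ (Fin n)) :
    Real.exp (2 * gevreyRadius δ t * (1 + ‖ξ‖ ^ 2) ^ δ) * ‖K0hat σ δ t ξ‖ ^ 2 ≤
      Real.exp t * (2 + 2 * t) ^ 2 := by
  refine exp_gevreyRadius_mul_sq_le hδ ht (norm_nonneg ξ) (norm_nonneg _) (fun hξ => ?_)
    fun hξ => (norm_K0hat_le_of_one_le_norm hδσ hξ).trans ?_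
  · linarith [norm_K0hat_le_of_norm_le_one (by linarith : 0 ≤ σ) hδ ht hξ]
  · gcongr
    linarith

theorem exp_mul_norm_dtK1hat_sq_le (hδ : 0 ≤ δ) (hδσ : δ ≤ σ / 2) (ht : 0 ≤ t)
    (ξ : EuclideanSpace ℝ (Fin n)) :
    Real.exp (2 * gevreyRadius δ t * (1 + ‖ξ‖ ^ 2) ^ δ) * ‖dtK1hat σ δ t ξ‖ ^ 2 ≤
      Real.exp t * (2 + 2 * t) ^ 2 := by
  refine exp_gevreyRadius_mul_sq_le hδ ht (norm_nonneg ξ) (norm_nonneg _) (fun hξ => ?_)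
    fun hξ => (norm_dtK1hat_le_of_one_le_norm hδσ hξ).trans ?_
  · linarith [norm_dtK1hat_le_of_norm_le_one (by linarith : 0 ≤ σ) hδ ht hξ]
  · gcongr
    linarith

theorem exp_mul_rpow_mul_norm_K1hat_sq_le (hδ : 0 ≤ δ) (hδσ : δ ≤ σ / 2) (ht : 0 ≤ t)
    (ξ : EuclideanSpace ℝ (Fin n)) :
    Real.exp (2 * gevreyRadius δ t * (1 + ‖ξ‖ ^ 2) ^ δ) *
        ((1 + ‖ξ‖ ^ 2) ^ σ * ‖K1hat σ δ t ξ‖ ^ 2) ≤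
      Real.exp t * (2 ^ (σ / 2) * (2 + 2 * t)) ^ 2 := by
  have hσ : 0 ≤ σ / 2 := hδ.trans hδσ
  have hsq : (1 + ‖ξ‖ ^ 2) ^ σ * ‖K1hat σ δ t ξ‖ ^ 2 =
      ((1 + ‖ξ‖ ^ 2) ^ (σ / 2) * ‖K1hat σ δ t ξ‖) ^ 2 := by
    rw [mul_pow, ← Real.rpow_mul_natCast (by positivity), Nat.cast_ofNat,
      div_mul_cancel₀ σ two_ne_zero]
  rw [hsq]
  refine exp_gevreyRadius_mul_sq_le hδ ht (norm_nonneg ξ) (by positivity) (fun hξ => ?_)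
    fun hξ => ?_
  · have hK1 : ‖K1hat σ δ t ξ‖ ≤ 2 + 2 * t := (norm_K1hat_le ht).trans (by linarith)
    exact mul_le_mul (one_add_sq_rpow_le_of_le_one hσ (norm_nonneg ξ) hξ) hK1 (norm_nonneg _)
      (by positivity)
  · calc (1 + ‖ξ‖ ^ 2) ^ (σ / 2) * ‖K1hat σ δ t ξ‖
        ≤ 2 ^ (σ / 2) * ‖ξ‖ ^ (2 * (σ / 2)) * ‖K1hat σ δ t ξ‖ := by
          gcongr
          exact one_add_sq_rpow_le_of_one_le hσ hξ
      _ = 2 ^ (σ / 2) * (‖ξ‖ ^ σ * ‖K1hat σ δ t ξ‖) := by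
          rw [mul_div_cancel₀ σ two_ne_zero, mul_assoc]
      _ ≤ 2 ^ (σ / 2) * (2 * Real.exp (-(‖ξ‖ ^ (2 * δ) * t / 2))) := by
          gcongr _ * ?_
          exact rpow_mul_norm_K1hat_le_of_one_le_norm hδσ hξ
      _ ≤ 2 ^ (σ / 2) * (2 + 2 * t) * Real.exp (-(‖ξ‖ ^ (2 * δ) * t / 2)) := by
          rw [mul_assoc]
          gcongr
          linarith

theorem exp_mul_norm_rpow_mul_K1hat_sq_le (hδ : 0 ≤ δ) (hδσ : δ ≤ σ / 2) (ht : 0 ≤ t)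
    (ξ : EuclideanSpace ℝ (Fin n)) :
    Real.exp (2 * gevreyRadius δ t * (1 + ‖ξ‖ ^ 2) ^ δ) *
        ‖-((‖ξ‖ ^ (2 * σ) : ℝ) : ℂ) * K1hat σ δ t ξ‖ ^ 2 ≤
      Real.exp t * (2 ^ (σ / 2) * (2 + 2 * t)) ^ 2 * (1 + ‖ξ‖ ^ 2) ^ σ := by
  set E := Real.exp (2 * gevreyRadius δ t * (1 + ‖ξ‖ ^ 2) ^ δ)
  set J := (1 + ‖ξ‖ ^ 2) ^ σ
  have hqJ : ‖ξ‖ ^ (2 * σ) ≤ J :=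
    rpow_two_mul_le_one_add_sq_rpow (by linarith) (norm_nonneg ξ)
  have hnorm : ‖-((‖ξ‖ ^ (2 * σ) : ℝ) : ℂ) * K1hat σ δ t ξ‖ ≤ J * ‖K1hat σ δ t ξ‖ := by
    rw [norm_mul, norm_neg, Complex.norm_of_nonneg (by positivity)]
    gcongr
  calc E * ‖-((‖ξ‖ ^ (2 * σ) : ℝ) : ℂ) * K1hat σ δ t ξ‖ ^ 2
      ≤ E * (J * ‖K1hat σ δ t ξ‖) ^ 2 := by gcongr
    _ = E * (J * ‖K1hat σ δ t ξ‖ ^ 2) * J := by ring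
    _ ≤ Real.exp t * (2 ^ (σ / 2) * (2 + 2 * t)) ^ 2 * J := by
        gcongr ?_ * J
        exact exp_mul_rpow_mul_norm_K1hat_sq_le hδ hδσ ht ξ

end WeightedBounds

section WeightedSquareIntegrability

variable {α : Type*} [MeasurableSpace α] {μ : Measure α} {W : α → ℝ}

theorem integrable_mul_norm_add_sq {E : Type*} [SeminormedAddCommGroup E] {f g : α → E}
    (hW : ∀ x, 0 ≤ W x) (hWm : AEStronglyMeasurable W μ)
    (hf : AEStronglyMeasurable f μ) (hg : AEStronglyMeasurable g μ)
    (hfint : Integrable (fun x => W x * ‖f x‖ ^ 2) μ)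
    (hgint : Integrable (fun x => W x * ‖g x‖ ^ 2) μ) :
    Integrable (fun x => W x * ‖f x + g x‖ ^ 2) μ := by
  refine ((hfint.add hgint).const_mul 2).mono' (hWm.mul ((hf.add hg).norm.pow 2))
    (.of_forall fun x => ?_)
  have hWx := hW x
  rw [Real.norm_of_nonneg (by positivity)]
  calc W x * ‖f x + g x‖ ^ 2 ≤ W x * (‖f x‖ + ‖g x‖) ^ 2 := by gcongr; exact norm_add_le _ _
    _ ≤ W x * (2 * (‖f x‖ ^ 2 + ‖g x‖ ^ 2)) := by gcongr; exact add_sq_le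
    _ = 2 * (W x * ‖f x‖ ^ 2 + W x * ‖g x‖ ^ 2) := by ring

theorem integrable_mul_norm_mul_sq {R : Type*} [SeminormedRing R] {W₀ : α → ℝ} {m v : α → R}
    {C : ℝ} (hW : ∀ x, 0 ≤ W x) (hWm : AEStronglyMeasurable W μ)
    (hm : AEStronglyMeasurable m μ) (hv : AEStronglyMeasurable v μ)
    (hbound : ∀ x, W x * ‖m x‖ ^ 2 ≤ C * W₀ x)
    (hvint : Integrable (fun x => W₀ x * ‖v x‖ ^ 2) μ) :
    Integrable (fun x => W x * ‖m x * v x‖ ^ 2) μ := by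
  refine (hvint.const_mul C).mono' (hWm.mul ((hm.mul hv).norm.pow 2)) (.of_forall fun x => ?_)
  have hWx := hW x
  rw [Real.norm_of_nonneg (by positivity)]
  calc W x * ‖m x * v x‖ ^ 2 ≤ W x * (‖m x‖ * ‖v x‖) ^ 2 := by gcongr; exact norm_mul_le _ _
    _ = W x * ‖m x‖ ^ 2 * ‖v x‖ ^ 2 := by ring
    _ ≤ C * W₀ x * ‖v x‖ ^ 2 := by gcongr ?_ * _; exact hbound x
    _ = C * (W₀ x * ‖v x‖ ^ 2) := by ring

end WeightedSquareIntegrability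

section GevreySmoothing

variable {σ δ t : ℝ} {μ : Measure (EuclideanSpace ℝ (Fin n))}
  {v₀ v₁ : EuclideanSpace ℝ (Fin n) → ℂ}

theorem integrable_gevrey_solution (hδ : 0 ≤ δ) (hδσ : δ ≤ σ / 2) (ht : 0 ≤ t)
    (hv₀ : AEStronglyMeasurable v₀ μ) (hv₁ : AEStronglyMeasurable v₁ μ)
    (hv₀int : Integrable (fun ξ => (1 + ‖ξ‖ ^ 2) ^ σ * ‖v₀ ξ‖ ^ 2) μ)
    (hv₁int : Integrable (fun ξ => ‖v₁ ξ‖ ^ 2) μ) :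
    Integrable (fun ξ => Real.exp (2 * gevreyRadius δ t * (1 + ‖ξ‖ ^ 2) ^ δ) *
      (1 + ‖ξ‖ ^ 2) ^ σ * ‖K0hat σ δ t ξ * v₀ ξ + K1hat σ δ t ξ * v₁ ξ‖ ^ 2) μ := by
  have hW (ξ : EuclideanSpace ℝ (Fin n)) :
      0 ≤ Real.exp (2 * gevreyRadius δ t * (1 + ‖ξ‖ ^ 2) ^ δ) * (1 + ‖ξ‖ ^ 2) ^ σ := by positivity
  have hWm : AEStronglyMeasurable (fun ξ : EuclideanSpace ℝ (Fin n) =>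
      Real.exp (2 * gevreyRadius δ t * (1 + ‖ξ‖ ^ 2) ^ δ) * (1 + ‖ξ‖ ^ 2) ^ σ) μ :=
    Measurable.aestronglyMeasurable (by fun_prop)
  have hK0 := measurable_K0hat (σ := σ) (δ := δ) (t := t) |>.aestronglyMeasurable (μ := μ)
  have hK1 := measurable_K1hat (σ := σ) (δ := δ) (t := t) |>.aestronglyMeasurable (μ := μ)
  refine integrable_mul_norm_add_sq hW hWm (hK0.mul hv₀) (hK1.mul hv₁)
    (integrable_mul_norm_mul_sq (C := Real.exp t * (2 + 2 * t) ^ 2) hW hWm hK0 hv₀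
      (fun ξ => ?_) hv₀int)
    (integrable_mul_norm_mul_sq (W₀ := 1) (C := Real.exp t * (2 ^ (σ / 2) * (2 + 2 * t)) ^ 2)
      hW hWm hK1 hv₁ (fun ξ => ?_) (by simpa using hv₁int))
  · rw [mul_right_comm]
    gcongr ?_ * _
    exact exp_mul_norm_K0hat_sq_le hδ hδσ ht ξ
  · rw [mul_assoc, Pi.one_apply, mul_one]
    exact exp_mul_rpow_mul_norm_K1hat_sq_le hδ hδσ ht ξ

theorem integrable_gevrey_velocity (hδ : 0 ≤ δ) (hδσ : δ ≤ σ / 2) (ht : 0 ≤ t)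
    (hv₀ : AEStronglyMeasurable v₀ μ) (hv₁ : AEStronglyMeasurable v₁ μ)
    (hv₀int : Integrable (fun ξ => (1 + ‖ξ‖ ^ 2) ^ σ * ‖v₀ ξ‖ ^ 2) μ)
    (hv₁int : Integrable (fun ξ => ‖v₁ ξ‖ ^ 2) μ) :
    Integrable (fun ξ => Real.exp (2 * gevreyRadius δ t * (1 + ‖ξ‖ ^ 2) ^ δ) *
      ‖-((‖ξ‖ ^ (2 * σ) : ℝ) : ℂ) * K1hat σ δ t ξ * v₀ ξ + dtK1hat σ δ t ξ * v₁ ξ‖ ^ 2) μ := by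
  have hW (ξ : EuclideanSpace ℝ (Fin n)) :
      0 ≤ Real.exp (2 * gevreyRadius δ t * (1 + ‖ξ‖ ^ 2) ^ δ) := by positivity
  have hWm : AEStronglyMeasurable (fun ξ : EuclideanSpace ℝ (Fin n) =>
      Real.exp (2 * gevreyRadius δ t * (1 + ‖ξ‖ ^ 2) ^ δ)) μ :=
    Measurable.aestronglyMeasurable (by fun_prop)
  have hqK1 : AEStronglyMeasurable (fun ξ : EuclideanSpace ℝ (Fin n) =>
      -((‖ξ‖ ^ (2 * σ) : ℝ) : ℂ) * K1hat σ δ t ξ) μ :=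
    Measurable.aestronglyMeasurable (by fun_prop)
  have hdtK1 := measurable_dtK1hat (σ := σ) (δ := δ) (t := t) |>.aestronglyMeasurable (μ := μ)
  refine integrable_mul_norm_add_sq hW hWm (hqK1.mul hv₀) (hdtK1.mul hv₁)
    (integrable_mul_norm_mul_sq hW hWm hqK1 hv₀
      (exp_mul_norm_rpow_mul_K1hat_sq_le hδ hδσ ht) hv₀int)
    (integrable_mul_norm_mul_sq (W₀ := 1) (C := Real.exp t * (2 + 2 * t) ^ 2) hW hWm hdtK1 hv₁
      (fun ξ => ?_) (by simpa using hv₁int))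
  rw [Pi.one_apply, mul_one]
  exact exp_mul_norm_dtK1hat_sq_le hδ hδσ ht ξ

-- With `μ = ⟨ξ⟩^{2s} dξ` this covers data in `H^{σ+s} × H^s`.
theorem stmt_18_general (hδ : 0 ≤ δ) (hδσ : δ ≤ σ / 2)
    (hv₀ : AEStronglyMeasurable v₀ μ) (hv₁ : AEStronglyMeasurable v₁ μ)
    (hv₀int : Integrable (fun ξ => (1 + ‖ξ‖ ^ 2) ^ σ * ‖v₀ ξ‖ ^ 2) μ)
    (hv₁int : Integrable (fun ξ => ‖v₁ ξ‖ ^ 2) μ) (ht : 0 ≤ t) :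
    Integrable (fun ξ => Real.exp (2 * gevreyRadius δ t * (1 + ‖ξ‖ ^ 2) ^ δ) *
      (1 + ‖ξ‖ ^ 2) ^ σ * ‖K0hat σ δ t ξ * v₀ ξ + K1hat σ δ t ξ * v₁ ξ‖ ^ 2) μ ∧
    Integrable (fun ξ => Real.exp (2 * gevreyRadius δ t * (1 + ‖ξ‖ ^ 2) ^ δ) *
      ‖-((‖ξ‖ ^ (2 * σ) : ℝ) : ℂ) * K1hat σ δ t ξ * v₀ ξ +
        (K0hat σ δ t ξ - ((‖ξ‖ ^ (2 * δ) : ℝ) : ℂ) * K1hat σ δ t ξ) * v₁ ξ‖ ^ 2) μ := by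
  simp only [K0hat_sub_mul_K1hat]
  exact ⟨integrable_gevrey_solution hδ hδσ ht hv₀ hv₁ hv₀int hv₁int,
    integrable_gevrey_velocity hδ hδσ ht hv₀ hv₁ hv₀int hv₁int⟩

end GevreySmoothing

/-- Gevrey smoothing: for data `(u₀,u₁) ∈ H^σ × L²` (on the Fourier side: `v₀, v₁`),
for every `t > 0` there is `a > 0` such that
`exp(a⟨ξ⟩^{2δ})⟨ξ⟩^σ v(t,·) ∈ L²` and `exp(a⟨ξ⟩^{2δ}) w(t,·) ∈ L²`,
i.e. `u(t,·) ∈ Γ^{1/(2δ),σ}` and `|D|^σ u(t,·), u_t(t,·) ∈ Γ^{1/(2δ),0}`. -/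
theorem stmt_18 (n : ℕ) (hn : 1 ≤ n) (σ δ : ℝ) (hσ : 1 ≤ σ) (hδ : δ ∈ Set.Ioo 0 (σ / 2))
    (v₀ v₁ : EuclideanSpace ℝ (Fin n) → ℂ) (hv₀ : Measurable v₀) (hv₁ : Measurable v₁)
    (hv₀int : Integrable (fun ξ : EuclideanSpace ℝ (Fin n) =>
      (1 + ‖ξ‖ ^ 2) ^ σ * ‖v₀ ξ‖ ^ 2) volume)
    (hv₁int : Integrable (fun ξ : EuclideanSpace ℝ (Fin n) => ‖v₁ ξ‖ ^ 2) volume) :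
    ∀ t : ℝ, 0 < t → ∃ a : ℝ, 0 < a ∧
      Integrable (fun ξ : EuclideanSpace ℝ (Fin n) =>
        Real.exp (2 * a * (1 + ‖ξ‖ ^ 2) ^ δ) * (1 + ‖ξ‖ ^ 2) ^ σ *
          ‖K0hat σ δ t ξ * v₀ ξ + K1hat σ δ t ξ * v₁ ξ‖ ^ 2) volume ∧
      Integrable (fun ξ : EuclideanSpace ℝ (Fin n) =>
        Real.exp (2 * a * (1 + ‖ξ‖ ^ 2) ^ δ) *
          ‖-((‖ξ‖ ^ (2 * σ) : ℝ) : ℂ) * K1hat σ δ t ξ * v₀ ξ +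
            (K0hat σ δ t ξ - ((‖ξ‖ ^ (2 * δ) : ℝ) : ℂ) * K1hat σ δ t ξ) * v₁ ξ‖ ^ 2) volume := by
  intro t ht
  exact ⟨gevreyRadius δ t, gevreyRadius_pos ht, stmt_18_general hδ.1.le hδ.2.le
    hv₀.aestronglyMeasurable hv₁.aestronglyMeasurable hv₀int hv₁int ht.le⟩
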